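/- For every unconstrained coefficient vector β ∈ ℝ^D and every segment index j with 1 ≤ j ≤ m − 1, the increment of H over the knot segment [k_j, k_{j+1}] has the closed form H(k_{j+1}) − H(k_j) = (1/6)·exp(γ_{j+1}) + (2/3)·exp(γ_{j+2}) + (1/6)·exp(γ_{j+3}); equivalently, the average derivative of H over [k_j, k_{j+1}] equals (1/k)·((1/6)·exp(γ_{j+1}) + (2/3)·exp(γ_{j+2}) + (1/6)·exp(γ_{j+3})). -/

import Mathlib

open MeasureTheory Finset

noncomputable section

/-- The cardinal cubic B-spline. -/
def cubicN (t : ℝ) : ℝ :=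
  if 0 ≤ t ∧ t < 1 then t ^ 3 / 6
  else if 1 ≤ t ∧ t < 2 then (-3 * t ^ 3 + 12 * t ^ 2 - 12 * t + 4) / 6
  else if 2 ≤ t ∧ t < 3 then (3 * t ^ 3 - 24 * t ^ 2 + 60 * t - 44) / 6
  else if 3 ≤ t ∧ t ≤ 4 then (4 - t) ^ 3 / 6
  else 0

/-- Equidistant knots `k_j = k0 + j·k`. -/
def knot (k0 k : ℝ) (j : ℤ) : ℝ := k0 + (j : ℝ) * k

/-- Cubic B-spline basis functions `B_j(x) = N((x − k_{j−3})/k)` for `j = 1, …, J`. -/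
def Bspl (k0 k : ℝ) (j : ℕ) (x : ℝ) : ℝ := cubicN ((x - knot k0 k ((j : ℤ) - 3)) / k)

/-- The coefficients `γ_1, …, γ_J` (with `J = D + 7`, `m = D + 5`), defined from the
unconstrained vector `β ∈ ℝ^D`. -/
def gam (D : ℕ) (k0 k : ℝ) (β : Fin D → ℝ) (j : ℕ) : ℝ :=
  if j = 1 then k0
  else if j = 2 ∨ j = 3 ∨ j = 4 ∨ j = D + 5 ∨ j = D + 6 ∨ j = D + 7 then Real.log k
  else if h : 5 ≤ j ∧ j ≤ D + 4 then
    β ⟨j - 5, by omega⟩ - Real.log ((∑ d, Real.exp (β d)) / ((D : ℝ) * k))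
  else 0

/-- The transformation `H`: a cubic B-spline with coefficients
`γ_1 + ∑_{ℓ=2}^j exp(γ_ℓ)` on `[k_1, k_m]` (with `m = D + 5`), and the identity outside. -/
def Hfun (D : ℕ) (k0 k : ℝ) (β : Fin D → ℝ) (x : ℝ) : ℝ :=
  if knot k0 k 1 ≤ x ∧ x ≤ knot k0 k ((D : ℤ) + 5) then
    ∑ j ∈ Finset.Icc 1 (D + 7),
      Bspl k0 k j x * (gam D k0 k β 1 + ∑ l ∈ Finset.Icc 2 j, Real.exp (gam D k0 k β l))
  else x

/-!
The cardinal cubic B-spline is a fourth difference of `|t|³ / 12`, hence `C¹`, so `H` is `C¹` on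
`[k_1, k_m]` and its average derivative over a segment is its increment divided by `k`. At the
integers the B-spline takes the values `1/6, 2/3, 1/6` at `1, 2, 3` and vanishes elsewhere, so
`H(k_j) = c_j / 6 + 2 c_{j+1} / 3 + c_{j+2} / 6` with `c_j = γ_1 + ∑_{ℓ=2}^j exp γ_ℓ`, and the
increment involves only the differences `c_{j+1} - c_j = exp γ_{j+1}`.
-/

lemma contDiff_one_abs_pow {n : ℕ} (hn : 1 < n) : ContDiff ℝ 1 (fun x : ℝ ↦ |x| ^ n) := by
  simpa only [Real.norm_eq_abs, Real.rpow_natCast] using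
    contDiff_norm_rpow (E := ℝ) (p := n) (by exact_mod_cast hn)

-- The fourth difference annihilates cubics, so `|t|³ / 2` may replace the usual truncated power.
lemma cubicN_eq_fourth_difference (t : ℝ) :
    cubicN t =
      (|t| ^ 3 - 4 * |t - 1| ^ 3 + 6 * |t - 2| ^ 3 - 4 * |t - 3| ^ 3 + |t - 4| ^ 3) / 12 := by
  unfold cubicN
  grind [abs_of_nonneg, abs_of_nonpos]

lemma contDiff_cubicN : ContDiff ℝ 1 cubicN := by
  have habs (a : ℝ) : ContDiff ℝ 1 (fun t : ℝ ↦ |t - a| ^ 3) :=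
    (contDiff_one_abs_pow (by norm_num)).comp (contDiff_id.sub contDiff_const)
  have habs₀ : ContDiff ℝ 1 (fun t : ℝ ↦ |t| ^ 3) := contDiff_one_abs_pow (by norm_num)
  rw [funext cubicN_eq_fourth_difference]
  fun_prop

lemma cubicN_of_nonpos {t : ℝ} (ht : t ≤ 0) : cubicN t = 0 := by
  unfold cubicN
  grind

lemma cubicN_of_four_le {t : ℝ} (ht : 4 ≤ t) : cubicN t = 0 := by
  obtain rfl | hlt := ht.eq_or_lt
  · norm_num [cubicN]
  · unfold cubicN
    grind

lemma cubicN_one : cubicN 1 = 1 / 6 := by norm_num [cubicN]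

lemma cubicN_two : cubicN 2 = 2 / 3 := by norm_num [cubicN]

lemma cubicN_three : cubicN 3 = 1 / 6 := by norm_num [cubicN]

lemma knot_monotone (k0 : ℝ) {k : ℝ} (hk : 0 ≤ k) : Monotone (knot k0 k) := by
  intro i j hij
  unfold knot
  gcongr

lemma contDiff_Bspl (k0 k : ℝ) (i : ℕ) : ContDiff ℝ 1 (Bspl k0 k i) :=
  contDiff_cubicN.comp ((contDiff_id.sub contDiff_const).div_const k)

lemma Bspl_knot (k0 : ℝ) {k : ℝ} (hk : k ≠ 0) (i : ℕ) (n : ℤ) :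
    Bspl k0 k i (knot k0 k n) = cubicN ((n - i + 3 : ℤ) : ℝ) := by
  unfold Bspl knot
  congr 1
  push_cast
  field_simp
  ring

lemma Bspl_knot_eq_zero (k0 : ℝ) {k : ℝ} (hk : k ≠ 0) {i j : ℕ} (hi : i ∉ Icc j (j + 2)) :
    Bspl k0 k i (knot k0 k j) = 0 := by
  rw [Bspl_knot k0 hk]
  rw [mem_Icc, not_and_or, not_le, not_le] at hi
  rcases hi with hlt | hgt
  · exact cubicN_of_four_le (by exact_mod_cast (by lia : (4 : ℤ) ≤ j - i + 3))
  · exact cubicN_of_nonpos (by exact_mod_cast (by lia : (j - i + 3 : ℤ) ≤ 0))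

/-- The cubic spline `∑_{i ∈ s} c_i B_i` on the knots `k_j = k0 + j·k`. It is not cut off to an
interval, so it is a `C¹` function on all of `ℝ` that extends the spline part of `Hfun`. -/
def cubicSpline (k0 k : ℝ) (s : Finset ℕ) (c : ℕ → ℝ) (x : ℝ) : ℝ :=
  ∑ i ∈ s, Bspl k0 k i x * c i

lemma contDiff_cubicSpline (k0 k : ℝ) (s : Finset ℕ) (c : ℕ → ℝ) :
    ContDiff ℝ 1 (cubicSpline k0 k s c) :=
  ContDiff.sum fun i _ ↦ (contDiff_Bspl k0 k i).mul contDiff_const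

lemma cubicSpline_knot (k0 : ℝ) {k : ℝ} (hk : k ≠ 0) {s : Finset ℕ} (c : ℕ → ℝ) {j : ℕ}
    (hs : Icc j (j + 2) ⊆ s) :
    cubicSpline k0 k s c (knot k0 k j) =
      1 / 6 * c j + 2 / 3 * c (j + 1) + 1 / 6 * c (j + 2) := by
  have hB₀ : Bspl k0 k j (knot k0 k j) = 1 / 6 := by
    rw [Bspl_knot k0 hk, ← cubicN_three]
    simp
  have hB₁ : Bspl k0 k (j + 1) (knot k0 k j) = 2 / 3 := by
    rw [Bspl_knot k0 hk, ← cubicN_two]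
    congr 1
    push_cast
    ring
  have hB₂ : Bspl k0 k (j + 2) (knot k0 k j) = 1 / 6 := by
    rw [Bspl_knot k0 hk, ← cubicN_one]
    congr 1
    push_cast
    ring
  calc cubicSpline k0 k s c (knot k0 k j)
      = ∑ i ∈ Icc j (j + 2), Bspl k0 k i (knot k0 k j) * c i :=
        (sum_subset hs fun i _ hi ↦ by rw [Bspl_knot_eq_zero k0 hk hi, zero_mul]).symm
    _ = 1 / 6 * c j + 2 / 3 * c (j + 1) + 1 / 6 * c (j + 2) := by
        rw [sum_Icc_succ_top (by lia), sum_Icc_succ_top (by lia), Icc_self, sum_singleton,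
          hB₀, hB₁, hB₂]

lemma cubicSpline_knot_succ_sub (k0 : ℝ) {k : ℝ} (hk : k ≠ 0) {s : Finset ℕ} (c : ℕ → ℝ) {j : ℕ}
    (hs : Icc j (j + 3) ⊆ s) :
    cubicSpline k0 k s c (knot k0 k (j + 1)) - cubicSpline k0 k s c (knot k0 k j) =
      1 / 6 * (c (j + 1) - c j) + 2 / 3 * (c (j + 2) - c (j + 1)) +
        1 / 6 * (c (j + 3) - c (j + 2)) := by
  have hright := cubicSpline_knot k0 hk c ((Icc_subset_Icc_left (by lia : j ≤ j + 1)).trans hs)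
  have hleft := cubicSpline_knot k0 hk c ((Icc_subset_Icc_right (by lia : j + 2 ≤ j + 3)).trans hs)
  push_cast at hright
  rw [hright, hleft]
  ring

/-- The spline coefficients `c_j = γ_1 + ∑_{ℓ=2}^j exp γ_ℓ`, increasing in `j ≥ 1` whatever the
unconstrained parameters `γ` are. -/
def expSumCoeff (γ : ℕ → ℝ) (j : ℕ) : ℝ := γ 1 + ∑ l ∈ Icc 2 j, Real.exp (γ l)

lemma expSumCoeff_succ_sub (γ : ℕ → ℝ) {j : ℕ} (hj : 1 ≤ j) :
    expSumCoeff γ (j + 1) - expSumCoeff γ j = Real.exp (γ (j + 1)) := by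
  unfold expSumCoeff
  rw [sum_Icc_succ_top (by lia)]
  ring

lemma cubicSpline_expSumCoeff_knot_succ_sub (k0 : ℝ) {k : ℝ} (hk : k ≠ 0) {s : Finset ℕ}
    (γ : ℕ → ℝ) {j : ℕ} (hj : 1 ≤ j) (hs : Icc j (j + 3) ⊆ s) :
    cubicSpline k0 k s (expSumCoeff γ) (knot k0 k (j + 1)) -
        cubicSpline k0 k s (expSumCoeff γ) (knot k0 k j) =
      1 / 6 * Real.exp (γ (j + 1)) + 2 / 3 * Real.exp (γ (j + 2)) +
        1 / 6 * Real.exp (γ (j + 3)) := by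
  rw [cubicSpline_knot_succ_sub k0 hk _ hs, expSumCoeff_succ_sub γ hj,
    expSumCoeff_succ_sub γ (by lia : 1 ≤ j + 1), expSumCoeff_succ_sub γ (by lia : 1 ≤ j + 2)]

lemma Hfun_eqOn_cubicSpline (D : ℕ) (k0 k : ℝ) (β : Fin D → ℝ) :
    Set.EqOn (Hfun D k0 k β) (cubicSpline k0 k (Icc 1 (D + 7)) (expSumCoeff (gam D k0 k β)))
      (Set.Icc (knot k0 k 1) (knot k0 k (D + 5))) :=
  fun _ hx ↦ if_pos hx

lemma contDiffOn_Hfun (D : ℕ) (k0 k : ℝ) (β : Fin D → ℝ) :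
    ContDiffOn ℝ 1 (Hfun D k0 k β) (Set.Icc (knot k0 k 1) (knot k0 k (D + 5))) :=
  (contDiff_cubicSpline ..).contDiffOn.congr (Hfun_eqOn_cubicSpline D k0 k β)

/-- For every `β ∈ ℝ^D` and every segment index `j` with `1 ≤ j ≤ m − 1`
(`m = D + 5`), the increment of `H` over `[k_j, k_{j+1}]` has the closed form
`H(k_{j+1}) − H(k_j) = (1/6)·exp(γ_{j+1}) + (2/3)·exp(γ_{j+2}) + (1/6)·exp(γ_{j+3})`;
equivalently, the average derivative of `H` over `[k_j, k_{j+1}]` equals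
`(1/k)·((1/6)·exp(γ_{j+1}) + (2/3)·exp(γ_{j+2}) + (1/6)·exp(γ_{j+3}))`. -/
theorem H_segment_increment (D : ℕ) (hD : 1 ≤ D) (k0 k : ℝ) (hk : 0 < k)
    (β : Fin D → ℝ) (j : ℕ) (hj1 : 1 ≤ j) (hj2 : j ≤ D + 4) :
    (Hfun D k0 k β (knot k0 k ((j : ℤ) + 1)) - Hfun D k0 k β (knot k0 k (j : ℤ))
      = (1 / 6) * Real.exp (gam D k0 k β (j + 1))
        + (2 / 3) * Real.exp (gam D k0 k β (j + 2))
        + (1 / 6) * Real.exp (gam D k0 k β (j + 3))) ∧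
    (1 / k) * ∫ x in (knot k0 k (j : ℤ))..(knot k0 k ((j : ℤ) + 1)),
        deriv (Hfun D k0 k β) x
      = (1 / k) * ((1 / 6) * Real.exp (gam D k0 k β (j + 1))
        + (2 / 3) * Real.exp (gam D k0 k β (j + 2))
        + (1 / 6) * Real.exp (gam D k0 k β (j + 3))) := by
  have hmono : Monotone (knot k0 k) := knot_monotone k0 hk.le
  have hsegment : knot k0 k j ≤ knot k0 k (j + 1) := hmono (by lia)
  have hsubset : Set.Icc (knot k0 k j) (knot k0 k (j + 1)) ⊆
      Set.Icc (knot k0 k 1) (knot k0 k (D + 5)) :=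
    Set.Icc_subset_Icc (hmono (by lia)) (hmono (by lia))
  have heq := (Hfun_eqOn_cubicSpline D k0 k β).mono hsubset
  have hincrement := cubicSpline_expSumCoeff_knot_succ_sub k0 hk.ne' (gam D k0 k β) hj1
    (Icc_subset_Icc hj1 (by lia : j + 3 ≤ D + 7))
  rw [← heq (Set.right_mem_Icc.2 hsegment), ← heq (Set.left_mem_Icc.2 hsegment)] at hincrement
  refine ⟨hincrement, ?_⟩
  rw [intervalIntegral.integral_deriv_of_contDiffOn_Icc
    ((contDiffOn_Hfun D k0 k β).mono hsubset) hsegment, hincrement]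

end
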